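/- Let m and F be positive integers with m not dividing F, and let S ∈ 𝓡(F,m). Then S is a maximal element of 𝓡(F,m) with respect to inclusion if and only if one of the following holds: (1) F = m − 1 and g(S) = m − 1; (2) m < F < 2m and g(S) = m; (3) F > 2m and g(S) = ⌈(F+1)/2⌉. -/

import Mathlib

/-!
Each of the three genus values is the least genus possible in `RFm F m`, so a semigroup attaining it
is maximal: enlarging a set with finite complement strictly lowers its genus (`maximal_of_genus_le`).
The lower bounds are `le_genus` (the numbers `1, …, m - 1`, and possibly `F`, are gaps) and
`genus_ge_half` (`x ↦ F - x` maps elements to gaps, and `F / 2` is a gap when `F` is even).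

Conversely, let `S` be maximal. If `F < m` then the gaps are exactly `1, …, m - 1`.
If `m < F < 2 * m`, then `{0} ∪ {x | m ≤ x, x ≠ F}` is the largest element of the family and has
genus `m`. If `2 * m < F`, suppose some gap `x ≠ F / 2` has `F - x` also a gap, and let `h` be the
largest such `x`. By symmetry `F < 2 * h`, and then `S ∪ {h}` is again a semigroup with Frobenius
number `F`. As `h > F / 2 > m`, its multiplicity is still `m`, contradicting maximality. So all gaps
other than `F / 2` are of the form `F - s` with `s ∈ S`, which gives the genus (`genus_le_half`).
-/

/-- A numerical semigroup: a submonoid of (ℕ,+) with finite complement. -/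
def IsNumericalSemigroup (S : Set ℕ) : Prop :=
  0 ∈ S ∧ (∀ a ∈ S, ∀ b ∈ S, a + b ∈ S) ∧ Sᶜ.Finite

/-- The multiplicity m(S): least positive element of S. -/
noncomputable def mult (S : Set ℕ) : ℕ := sInf {s | s ∈ S ∧ s ≠ 0}

/-- The ratio r(S): least s ∈ S not divisible by the multiplicity. -/
noncomputable def ratio (S : Set ℕ) : ℕ := sInf {s | s ∈ S ∧ ¬ mult S ∣ s}

/-- The Frobenius number F(S): largest integer not in S. -/
noncomputable def frob (S : Set ℕ) : ℕ := sSup Sᶜ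

/-- The genus g(S): number of gaps of S. -/
noncomputable def genus (S : Set ℕ) : ℕ := Sᶜ.ncard

/-- Pseudo-Frobenius numbers of S. -/
def PF (S : Set ℕ) : Set ℕ := {x | x ∉ S ∧ ∀ s ∈ S, s ≠ 0 → x + s ∈ S}

/-- Special gaps of S. -/
def SG (S : Set ℕ) : Set ℕ := {x | x ∈ PF S ∧ 2 * x ∈ S}

/-- The Apéry set of n in S: elements s of S with s - n ∉ S (as integers). -/
def Ap (S : Set ℕ) (n : ℕ) : Set ℕ := {s | s ∈ S ∧ ¬ ∃ t ∈ S, t + n = s}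

/-- The minimal system of generators of a numerical semigroup:
    nonzero elements not expressible as a sum of two nonzero elements. -/
def msg (S : Set ℕ) : Set ℕ :=
  {x | x ∈ S ∧ x ≠ 0 ∧ ∀ a ∈ S, ∀ b ∈ S, a ≠ 0 → b ≠ 0 → x ≠ a + b}

/-- The embedding dimension e(S). -/
noncomputable def edim (S : Set ℕ) : ℕ := (msg S).ncard

/-- The submonoid of ℕ generated by a set A. -/
def closureSet (A : Set ℕ) : Set ℕ := (AddSubmonoid.closure A : Set ℕ)

/-- M is the minimum of the family R with respect to inclusion. -/
def IsMinOf (R : Set (Set ℕ)) (M : Set ℕ) : Prop := M ∈ R ∧ ∀ S ∈ R, M ⊆ S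

/-- A ratio-covariety. -/
def IsRatioCovariety (R : Set (Set ℕ)) : Prop :=
  R.Nonempty ∧ (∀ S ∈ R, IsNumericalSemigroup S) ∧
  (∃ M, IsMinOf R M) ∧
  (∀ S ∈ R, ∀ T ∈ R, S ∩ T ∈ R) ∧
  (∀ S ∈ R, ∀ M, IsMinOf R M → S ≠ M → S \ {ratio S} ∈ R)

/-- The family 𝓡(F,m) of numerical semigroups with Frobenius number F and multiplicity m. -/
def RFm (F m : ℕ) : Set (Set ℕ) :=
  {S | IsNumericalSemigroup S ∧ frob S = F ∧ mult S = m}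

/-- Δ(F,m) = ⟨m⟩ ∪ {F+1, →}. -/
def Delta (F m : ℕ) : Set ℕ := {n | m ∣ n} ∪ {n | F < n}

/-- X is an 𝓡-set: disjoint from min(𝓡) and contained in some element of 𝓡. -/
def IsRSet (R : Set (Set ℕ)) (X : Set ℕ) : Prop :=
  (∀ M, IsMinOf R M → X ∩ M = ∅) ∧ ∃ S ∈ R, X ⊆ S

/-- 𝓡[X]: the intersection of all elements of 𝓡 containing X. -/
def RGen (R : Set (Set ℕ)) (X : Set ℕ) : Set ℕ := ⋂₀ {S | S ∈ R ∧ X ⊆ S}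

/-- The 𝓡-rank of S. -/
noncomputable def Rrank (R : Set (Set ℕ)) (S : Set ℕ) : ℕ :=
  sInf {n | ∃ X, IsRSet R X ∧ RGen R X = S ∧ X.ncard = n}

lemma mem_RFm_iff {F m : ℕ} (hm : 0 < m) (hF : 0 < F) (S : Set ℕ) :
    S ∈ RFm F m ↔ 0 ∈ S ∧ (∀ a ∈ S, ∀ b ∈ S, a + b ∈ S) ∧ F ∉ S ∧ (∀ x, F < x → x ∈ S) ∧
      m ∈ S ∧ (∀ x ∈ S, x ≠ 0 → m ≤ x) := by
  constructor
  · rintro ⟨⟨h0, hadd, hfin⟩, hf, hmu⟩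
    -- `F > 0` and `m > 0` rule out the junk values of `sSup ∅` and `sInf ∅`.
    have hne : Sᶜ.Nonempty := by
      by_contra h
      rw [Set.not_nonempty_iff_eq_empty] at h
      simp [frob, h] at hf
      omega
    have hne2 : {s | s ∈ S ∧ s ≠ 0}.Nonempty := by
      by_contra h
      rw [Set.not_nonempty_iff_eq_empty] at h
      simp only [mult, h, Nat.sInf_empty] at hmu
      omega
    refine ⟨h0, hadd, ?_, ?_, ?_, ?_⟩
    · have := Nat.sSup_mem hne hfin.bddAbove
      rw [← hf]
      exact this
    · intro x hx
      by_contra hxS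
      have : x ≤ frob S := le_csSup hfin.bddAbove hxS
      omega
    · have := Nat.sInf_mem hne2
      rw [← hmu]
      exact this.1
    · intro x hx hx0
      rw [← hmu]
      exact Nat.sInf_le ⟨hx, hx0⟩
  · rintro ⟨h0, hadd, hFS, hgt, hmS, hmin⟩
    refine ⟨⟨h0, hadd, ?_⟩, ?_, ?_⟩
    · refine (Set.finite_Iic F).subset fun x hx => ?_
      by_contra h
      exact hx (hgt x (by simpa using h))
    · refine IsGreatest.csSup_eq ⟨hFS, fun x hx => ?_⟩
      by_contra h
      exact hx (hgt x (by omega))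
    · exact IsLeast.csInf_eq ⟨⟨hmS, by omega⟩, fun x hx => hmin x hx.1 hx.2⟩

/-- A member of the family whose genus is a lower bound for the genus is maximal. -/
lemma maximal_of_genus_le {F m : ℕ} {S : Set ℕ} (hS : S ∈ RFm F m)
    (h : ∀ T ∈ RFm F m, genus S ≤ genus T) : Maximal (· ∈ RFm F m) S := by
  refine ⟨hS, fun T hT hST => ?_⟩
  have h1 : Tᶜ = Sᶜ :=
    Set.eq_of_subset_of_ncard_le (Set.compl_subset_compl.2 hST) (h T hT) hS.1.2.2
  rw [compl_inj_iff] at h1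
  exact h1.le

lemma ncard_Ioo_insert {F m : ℕ} (hm : 0 < m) (h : m < F) :
    (insert F (Set.Ioo 0 m)).ncard = m := by
  rw [Set.ncard_insert_of_notMem (by simp; omega) (Set.finite_Ioo 0 m)]
  simp
  omega

lemma le_genus {F m : ℕ} (hm : 0 < m) (hF : 0 < F) {S : Set ℕ} (hS : S ∈ RFm F m) :
    m - 1 ≤ genus S ∧ (m < F → m ≤ genus S) := by
  obtain ⟨-, -, hFS, -, -, hmin⟩ := (mem_RFm_iff hm hF S).1 hS
  have hsub : Set.Ioo 0 m ⊆ Sᶜ := fun x hx hxS => by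
    have := hmin x hxS (by have := hx.1; omega)
    have := hx.2
    omega
  constructor
  · have := Set.ncard_le_ncard hsub hS.1.2.2
    simpa [genus] using this
  · intro h
    have := Set.ncard_le_ncard (Set.insert_subset hFS hsub) hS.1.2.2
    rwa [ncard_Ioo_insert hm h] at this

open Classical in
/-- The genus as the cardinality of a finset of gaps, together with the cardinality of the set
of reflections `F - s` of the elements `s ≤ F` of the semigroup. -/
lemma genus_finset {F m : ℕ} (hm : 0 < m) (hF : 0 < F) {S : Set ℕ} (hS : S ∈ RFm F m) :
    genus S = ((Finset.range (F + 1)).filter (· ∉ S)).card ∧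
    (((Finset.range (F + 1)).filter (· ∈ S)).image (F - ·)).card + genus S = F + 1 := by
  obtain ⟨-, -, -, hgt, -, -⟩ := (mem_RFm_iff hm hF S).1 hS
  have h1 : genus S = ((Finset.range (F + 1)).filter (· ∉ S)).card := by
    rw [genus, ← Set.ncard_coe_finset]
    congr 1
    ext x
    simp only [Set.mem_compl_iff, Finset.coe_filter, Finset.mem_range, Set.mem_ofPred_eq]
    refine ⟨fun h => ⟨?_, h⟩, fun h => h.2⟩
    by_contra hx
    exact h (hgt x (by omega))
  refine ⟨h1, ?_⟩
  rw [Finset.card_image_of_injOn, h1, Finset.card_filter_add_card_filter_not, Finset.card_range]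
  intro a ha b hb hab
  simp at ha hb hab
  omega

lemma genus_ge_half {F m : ℕ} (hm : 0 < m) (hF : 0 < F) {S : Set ℕ} (hS : S ∈ RFm F m) :
    (F + 2) / 2 ≤ genus S := by
  classical
  obtain ⟨h1, h2⟩ := genus_finset hm hF hS
  obtain ⟨-, hadd, hFS, -, -, -⟩ := (mem_RFm_iff hm hF S).1 hS
  have hsub : ((Finset.range (F + 1)).filter (· ∈ S)).image (F - ·) ⊆
      (Finset.range (F + 1)).filter (· ∉ S) := by
    intro x hx
    simp only [Finset.mem_image, Finset.mem_filter, Finset.mem_range] at hx ⊢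
    obtain ⟨a, ⟨haF, haS⟩, rfl⟩ := hx
    refine ⟨by omega, fun h => hFS ?_⟩
    have := hadd _ haS _ h
    rwa [Nat.add_sub_cancel' (by omega)] at this
  rcases Nat.even_or_odd' F with ⟨k, hk | hk⟩
  · have hkS : k ∉ S := fun h => hFS (by have := hadd k h k h; rwa [hk, two_mul])
    have hss := Finset.card_lt_card (Finset.ssubset_iff_of_subset hsub |>.2 ⟨k, by
      simp only [Finset.mem_filter, Finset.mem_range]
      exact ⟨by omega, hkS⟩, by
      simp only [Finset.mem_image, Finset.mem_filter, Finset.mem_range]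
      rintro ⟨a, ⟨haF, haS⟩, ha⟩
      apply hkS
      have : a = k := by omega
      rwa [← this]⟩)
    omega
  · have := Finset.card_le_card hsub
    omega

lemma genus_le_half {F m : ℕ} (hm : 0 < m) (hF : 0 < F) {S : Set ℕ} (hS : S ∈ RFm F m)
    (h : ∀ x ≤ F, x ∉ S → F - x ∈ S ∨ 2 * x = F) : genus S ≤ (F + 2) / 2 := by
  classical
  obtain ⟨h1, h2⟩ := genus_finset hm hF hS
  have key : ∀ x ∈ (Finset.range (F + 1)).filter (· ∉ S),
      x ∈ ((Finset.range (F + 1)).filter (· ∈ S)).image (F - ·) ∨ 2 * x = F := by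
    intro x hx
    simp only [Finset.mem_image, Finset.mem_filter, Finset.mem_range] at hx ⊢
    rcases h x (by omega) hx.2 with h | h
    · exact Or.inl ⟨F - x, ⟨by omega, h⟩, by omega⟩
    · exact Or.inr h
  rcases Nat.even_or_odd' F with ⟨k, hk | hk⟩
  · have := (Finset.card_le_card (fun x hx => Finset.mem_insert.2 <| (key x hx).elim Or.inr
      fun h => Or.inl (by omega : x = k))).trans (Finset.card_insert_le _ _)
    omega
  · have := Finset.card_le_card (fun x hx => (key x hx).resolve_right (by omega))
    omega

/-- A maximal member of the family with `2 * m < F` is symmetric or pseudo-symmetric. -/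
lemma gap_reflect_of_maximal {F m : ℕ} (hm : 0 < m) (hF : 0 < F) {S : Set ℕ}
    (hmax : Maximal (· ∈ RFm F m) S) (hFm : 2 * m < F) :
    ∀ x ≤ F, x ∉ S → F - x ∈ S ∨ 2 * x = F := by
  classical
  by_contra! hex
  obtain ⟨h0, hadd, hFS, hgt, hmS, hmin⟩ := (mem_RFm_iff hm hF S).1 hmax.1
  set P : ℕ → Prop := fun x => x ≤ F ∧ x ∉ S ∧ F - x ∉ S ∧ 2 * x ≠ F with hP
  obtain ⟨y, hy⟩ : ∃ y, P y := hex
  set h := Nat.findGreatest P F with hh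
  have hPh : P h := Nat.findGreatest_spec hy.1 hy
  have hle : ∀ x, P x → x ≤ h := fun x hx => Nat.le_findGreatest hx.1 hx
  obtain ⟨hhF, hhS, hhS', hh2⟩ := hPh
  have hbig : F < 2 * h := by
    have := hle (F - h) ⟨by omega, hhS', by rwa [Nat.sub_sub_self hhF], by omega⟩
    omega
  have hhneF : h ≠ F := fun e => hhS' (by simpa [e] using h0)
  have hadd' : ∀ s ∈ S, h + s ∈ insert h S := by
    intro s hs
    by_cases hs0 : s = 0
    · left
      omega
    right
    by_contra hc
    have hsF : h + s ≤ F := by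
      by_contra hlt
      exact hc (hgt _ (by omega))
    -- `h + s > h` is a gap, so it fails the defining property of `h` only via `F - (h + s) ∈ S`.
    have hr : F - (h + s) ∈ S := by
      by_contra hr
      have := hle (h + s) ⟨hsF, hc, hr, by omega⟩
      omega
    have := hadd _ hr _ hs
    rw [show F - (h + s) + s = F - h by omega] at this
    exact hhS' this
  have hT : insert h S ∈ RFm F m := by
    refine (mem_RFm_iff hm hF _).2 ⟨Or.inr h0, ?_, ?_, fun x hx => Or.inr (hgt x hx),
      Or.inr hmS, ?_⟩
    · rintro a (rfl | ha) b (rfl | hb)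
      · exact Or.inr (hgt _ (by omega))
      · exact hadd' b hb
      · rw [add_comm]
        exact hadd' a ha
      · exact Or.inr (hadd a ha b hb)
    · rintro (e | e)
      · exact hhneF e.symm
      · exact hFS e
    · rintro x (rfl | hx) hx0
      · omega
      · exact hmin x hx hx0
  exact hhS (hmax.2 hT (Set.subset_insert h S) (Set.mem_insert h S))

theorem maximal_in_RFm_iff (m F : ℕ) (hm : 0 < m) (hF : 0 < F) (hdvd : ¬ m ∣ F)
    (S : Set ℕ) (hS : S ∈ RFm F m) :
    Maximal (· ∈ RFm F m) S ↔
      (F = m - 1 ∧ genus S = m - 1) ∨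
      (m < F ∧ F < 2 * m ∧ genus S = m) ∨
      (2 * m < F ∧ genus S = (F + 2) / 2) := by
  obtain ⟨h0, hadd, hFS, hgt, hmS, hmin⟩ := (mem_RFm_iff hm hF S).1 hS
  constructor
  · intro hmax
    have hne1 : F ≠ m := fun e => hdvd (e ▸ dvd_rfl)
    have hne2 : F ≠ 2 * m := fun e => hdvd (e ▸ Dvd.intro_left 2 rfl)
    rcases lt_or_ge F m with h | h
    · left
      have hFm : F = m - 1 := by
        by_contra hne
        have := hmin (m - 1) (hgt _ (by omega)) (by omega)
        omega
      refine ⟨hFm, le_antisymm ?_ (le_genus hm hF hS).1⟩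
      have hsub : Sᶜ ⊆ Set.Ioo 0 m := by
        intro x hx
        constructor
        · exact Nat.pos_of_ne_zero fun e => hx (e ▸ h0)
        · by_contra hlt
          exact hx (hgt x (by omega))
      have := Set.ncard_le_ncard hsub (Set.finite_Ioo 0 m)
      simpa [genus] using this
    rcases lt_or_ge F (2 * m) with h' | h'
    · right; left
      refine ⟨by omega, h', le_antisymm ?_ ((le_genus hm hF hS).2 (by omega))⟩
      have hT : {x | x = 0 ∨ (m ≤ x ∧ x ≠ F)} ∈ RFm F m := by
        refine (mem_RFm_iff hm hF _).2 ⟨Or.inl rfl, ?_, ?_, ?_, ?_, ?_⟩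
        all_goals simp only [Set.mem_ofPred_eq]
        all_goals intros
        all_goals omega
      have hST : S ⊆ {x | x = 0 ∨ (m ≤ x ∧ x ≠ F)} := by
        intro x hx
        by_cases hx0 : x = 0
        · exact Or.inl hx0
        · exact Or.inr ⟨hmin x hx hx0, fun e => hFS (e ▸ hx)⟩
      have hTS := hmax.2 hT hST
      have hsub : Sᶜ ⊆ insert F (Set.Ioo 0 m) := by
        intro x hx
        by_contra hc
        simp only [Set.mem_insert_iff, Set.mem_Ioo, not_or] at hc
        exact hx (hTS (by simp only [Set.mem_ofPred_eq]; omega))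
      have := Set.ncard_le_ncard hsub ((Set.finite_Ioo 0 m).insert F)
      rwa [ncard_Ioo_insert hm (by omega)] at this
    · right; right
      have hlt : 2 * m < F := by omega
      exact ⟨hlt, le_antisymm (genus_le_half hm hF hS (gap_reflect_of_maximal hm hF hmax hlt))
        (genus_ge_half hm hF hS)⟩
  · rintro (⟨-, h⟩ | ⟨h1, -, h⟩ | ⟨-, h⟩) <;> refine maximal_of_genus_le hS fun T hT => h ▸ ?_
    · exact (le_genus hm hF hT).1
    · exact (le_genus hm hF hT).2 h1
    · exact genus_ge_half hm hF hT
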